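/- Let k ≥ 1, r = 2k+1 and n ≥ r+2 be integers. Then every r×n sign matrix has at most one k-neighborly plain travel. -/

import Mathlib

/-- An `r × n` sign matrix: entries in `{+1, -1}` (1-indexed: `1 ≤ i ≤ r`, `1 ≤ j ≤ n`). -/
def IsSignMatrix (r n : ℕ) (A : ℕ → ℕ → ℤ) : Prop :=
  ∀ i j, 1 ≤ i → i ≤ r → 1 ≤ j → j ≤ n → A i j = 1 ∨ A i j = -1

/-- `A_S`: the matrix obtained from `A` by negating every entry of each column in `S`. -/
def reorient (A : ℕ → ℕ → ℤ) (S : Finset ℕ) : ℕ → ℕ → ℤ :=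
  fun i j => if j ∈ S then -A i j else A i j

/-- The first column `c'` with `c < c' ≤ n` where row `i` changes sign relative to
entry `a_{i,c}`, if such a column exists. -/
def rowChange (A : ℕ → ℕ → ℤ) (n i c : ℕ) : Option ℕ :=
  (List.range (n + 1)).find? fun c' => decide (c < c' ∧ A i c' ≠ A i c)

/-- `ttEntry A n i` is the column at which the top travel of `A` enters row `i`
(rows and columns 1-indexed): the travel enters row 1 at column 1, and, having entered
row `i` at column `c`, it enters row `i+1` at the first sign change of row `i` after
column `c` (if any).  The value `some` at the "virtual" row `r+1` means the top travel
had a sign change in the bottom row `r`, i.e. the top travel is positive. -/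
def ttEntry (A : ℕ → ℕ → ℤ) (n : ℕ) : ℕ → Option ℕ
  | 0 => none
  | 1 => some 1
  | i + 2 => (ttEntry A n (i + 1)).bind (rowChange A n (i + 1))

/-- The top travel of the `r × n` sign matrix `A` is positive: it contains two
horizontally consecutive entries of row `r` with opposite signs. -/
def ttPositive (A : ℕ → ℕ → ℤ) (r n : ℕ) : Prop :=
  (ttEntry A n (r + 1)).isSome

/-- `A` is `k`-neighborly: for every set `S` of at most `k` columns, the top travel
of `A_S` is not positive. -/
def IsNeighborly (A : ℕ → ℕ → ℤ) (r n k : ℕ) : Prop :=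
  ∀ S : Finset ℕ, S ⊆ Finset.Icc 1 n → S.card ≤ k → ¬ ttPositive (reorient A S) r n

/-- A plain travel of an `r × n` sign matrix, identified with the set `D` of columns of
its downward (vertical) moves: the columns `2 ≤ j₁ < ⋯ < j_{s-1} ≤ n` with `s ≤ r`. -/
def IsPlainTravel (r n : ℕ) (D : Finset ℕ) : Prop :=
  D ⊆ Finset.Icc 2 n ∧ D.card ≤ r - 1

/-- The top travel of `A` follows exactly the plain travel with downward-move columns `D`:
it makes its downward moves precisely at the columns of `D` (entering rows `2, …, |D|+1`
there) and then ends at column `n` in row `|D|+1` without a further sign change. -/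
def ttFollows (A : ℕ → ℕ → ℤ) (n : ℕ) (D : Finset ℕ) : Prop :=
  ttEntry A n (D.card + 2) = none ∧
  ∀ c, c ∈ D ↔ ∃ i, 2 ≤ i ∧ i ≤ D.card + 1 ∧ ttEntry A n i = some c

/-- The plain travel `D` of `A` is `k`-neighborly: there is a set `R` of columns such that
the top travel of `A_R` follows exactly the path `D` and `A_R` is a `k`-neighborly matrix. -/
def IsNeighborlyTravel (A : ℕ → ℕ → ℤ) (r n k : ℕ) (D : Finset ℕ) : Prop :=
  ∃ R : Finset ℕ, R ⊆ Finset.Icc 1 n ∧ ttFollows (reorient A R) n D ∧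
    IsNeighborly (reorient A R) r n k

/-! Call a column set `T` alternating on columns `c₀ < ⋯ < c_r` if each row `i` of `A_T` changes
sign between `c_{i-1}` and `c_i`. Such a `T` always exists, and it makes the top travel positive,
since the travel moves down no later than this chain does.

Let `A_R` be `k`-neighborly and let `C` be the set of the `r + 1 = 2k + 2` columns `c_i`. Both
`C ∩ (R ∆ T)` and its complement in `C` turn `A_R` into a matrix alternating on `C`, so both have
more than `k` elements, and hence exactly `k + 1`. If `A_{R₁}` and `A_{R₂}` are both `k`-neighborly,
it follows that `C ∩ (R₁ ∆ R₂)` has even size for every `C` with `r + 1 < n` elements. Therefore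
`R₁ ∆ R₂` contains all columns or none, and so `A_{R₁} = ± A_{R₂}` has a single top travel. -/

section Parity

open Finset
open scoped symmDiff

variable {α : Type*} [DecidableEq α]

theorem card_symmDiff_add_two_mul_card_inter (s t : Finset α) :
    #(s ∆ t) + 2 * #(s ∩ t) = #s + #t := by
  have hst : #(s ∆ t) = #(s \ t) + #(t \ s) := card_union_of_disjoint disjoint_sdiff_sdiff
  have hs := card_sdiff_add_card_inter s t
  have ht := card_sdiff_add_card_inter t s
  rw [inter_comm t s] at ht
  omega

theorem even_card_symmDiff_of_card_eq {s t : Finset α} (h : #s = #t) : Even #(s ∆ t) := by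
  have := card_symmDiff_add_two_mul_card_inter s t
  grind

theorem subset_or_disjoint_of_forall_even_card_inter {X Q : Finset α} {m : ℕ} (hm : m + 1 < #X)
    (h : ∀ C ⊆ X, #C = m + 1 → Even #(C ∩ Q)) : X ⊆ Q ∨ Disjoint X Q := by
  by_contra! hcon
  obtain ⟨a, haX, haQ⟩ := not_subset.mp hcon.1
  obtain ⟨b, hbX, hbQ⟩ := not_disjoint_iff.mp hcon.2
  have hba : b ∈ X.erase a := mem_erase.mpr ⟨fun hab => haQ (hab ▸ hbQ), hbX⟩
  obtain ⟨U, hU, hUm⟩ : ∃ U ⊆ (X.erase a).erase b, #U = m := exists_subset_card_eq <| by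
    rw [card_erase_of_mem hba, card_erase_of_mem haX]
    omega
  have haU : a ∉ U := fun ha => notMem_erase a X (mem_of_mem_erase (hU ha))
  have hbU : b ∉ U := fun hb => notMem_erase b _ (hU hb)
  have hUX : U ⊆ X := hU.trans ((erase_subset _ _).trans (erase_subset _ _))
  have ha := h (insert a U) (insert_subset haX hUX) (by rw [card_insert_of_notMem haU, hUm])
  have hb := h (insert b U) (insert_subset hbX hUX) (by rw [card_insert_of_notMem hbU, hUm])
  rw [insert_inter_of_notMem haQ] at ha
  rw [insert_inter_of_mem hbQ, card_insert_of_notMem (fun hb => hbU (mem_inter.mp hb).1)] at hb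
  exact Nat.even_add_one.mp hb ha

end Parity

section Reorientation

open scoped symmDiff

theorem IsSignMatrix.ne_zero {r n : ℕ} {A : ℕ → ℕ → ℤ} (hA : IsSignMatrix r n A) {i j : ℕ}
    (hi : i ∈ Finset.Icc 1 r) (hj : j ∈ Finset.Icc 1 n) : A i j ≠ 0 := by
  rw [Finset.mem_Icc] at hi hj
  rcases hA i j hi.1 hi.2 hj.1 hj.2 with h | h <;> simp [h]

theorem reorient_reorient (A : ℕ → ℕ → ℤ) (R S : Finset ℕ) :
    reorient (reorient A R) S = reorient A (R ∆ S) := by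
  funext i j
  by_cases hR : j ∈ R <;> by_cases hS : j ∈ S <;> simp [reorient, Finset.mem_symmDiff, hR, hS]

/-- The rows of `A` and `B` have their sign changes between the same pairs of columns of `C`.
For sign matrices this says that on `C` corresponding rows agree up to a sign, which is all that
top travels depend on. As in `rowChange`, a sign change is encoded as an inequality of entries. -/
def SameSignChanges (A B : ℕ → ℕ → ℤ) (C : Finset ℕ) : Prop :=
  ∀ i, ∀ x ∈ C, ∀ y ∈ C, A i x = A i y ↔ B i x = B i y

theorem sameSignChanges_reorient (A : ℕ → ℕ → ℤ) {S T C : Finset ℕ}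
    (h : C ⊆ S ∆ T ∨ Disjoint C (S ∆ T)) :
    SameSignChanges (reorient A S) (reorient A T) C := by
  intro i x hx y hy
  have hxy : x ∈ S ∆ T ↔ y ∈ S ∆ T := by
    rcases h with h | h
    · exact iff_of_true (h hx) (h hy)
    · exact iff_of_false (Finset.disjoint_left.mp h hx) (Finset.disjoint_left.mp h hy)
  simp only [Finset.mem_symmDiff] at hxy
  simp only [reorient]
  grind

end Reorientation

section TopTravel

variable {A B : ℕ → ℕ → ℤ} {n i c d : ℕ}

theorem rowChange_eq_some_iff :
    rowChange A n i c = some d ↔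
      (c < d ∧ A i d ≠ A i c) ∧ d ≤ n ∧ ∀ x < d, c < x → A i x = A i c := by
  simp only [rowChange, List.find?_range_eq_some, decide_eq_true_eq, List.mem_range,
    Nat.lt_succ_iff, Bool.not_eq_true', decide_eq_false_iff_not, not_and, not_not]

theorem exists_rowChange_le_of_ne (hcd : c < d) (hdn : d ≤ n) (hd : A i d ≠ A i c) :
    ∃ e ≤ d, rowChange A n i c = some e := by
  classical
  have hex : ∃ x, c < x ∧ A i x ≠ A i c := ⟨d, hcd, hd⟩
  have hle : Nat.find hex ≤ d := Nat.find_min' hex ⟨hcd, hd⟩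
  refine ⟨Nat.find hex, hle, rowChange_eq_some_iff.mpr ⟨Nat.find_spec hex, hle.trans hdn, ?_⟩⟩
  intro x hx hcx
  by_contra hne
  exact Nat.find_min hex hx ⟨hcx, hne⟩

theorem exists_rowChange_le_of_le {x y : ℕ} (hcx : c ≤ x) (hxy : x < y) (hyn : y ≤ n)
    (hne : A i x ≠ A i y) : ∃ e ≤ y, rowChange A n i c = some e := by
  by_cases hy : A i y = A i c
  · have hx : A i x ≠ A i c := fun hx => hne (hx.trans hy.symm)
    have hcx' : c < x := lt_of_le_of_ne hcx (by rintro rfl; exact hx rfl)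
    obtain ⟨e, hex, he⟩ := exists_rowChange_le_of_ne hcx' (hxy.le.trans hyn) hx
    exact ⟨e, hex.trans hxy.le, he⟩
  · exact exists_rowChange_le_of_ne (hcx.trans_lt hxy) hyn hy

theorem rowChange_congr (h : SameSignChanges A B (Finset.Icc 1 n)) (hc : c ∈ Finset.Icc 1 n) :
    rowChange A n i c = rowChange B n i c := by
  refine List.find?_congr fun x hx => decide_eq_decide.mpr (and_congr_right fun hcx => ?_)
  rw [List.mem_range] at hx
  exact not_congr (h i x (Finset.mem_Icc.mpr (by omega)) c hc)

theorem mem_Icc_of_ttEntry_eq_some (hn : 1 ≤ n) (h : ttEntry A n i = some c) :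
    c ∈ Finset.Icc 1 n := by
  match i with
  | 0 => simp [ttEntry] at h
  | 1 => simp_all [ttEntry, eq_comm]
  | i + 2 =>
    obtain ⟨b, -, hbc⟩ := Option.bind_eq_some_iff.mp h
    obtain ⟨⟨hlt, -⟩, hcn, -⟩ := rowChange_eq_some_iff.mp hbc
    exact Finset.mem_Icc.mpr ⟨by omega, hcn⟩

theorem ttEntry_congr (hn : 1 ≤ n) (h : SameSignChanges A B (Finset.Icc 1 n)) :
    ttEntry A n = ttEntry B n := by
  funext i
  induction i using Nat.twoStepInduction with
  | zero => rfl
  | one => rfl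
  | more i _ ih =>
    simp only [ttEntry, ← ih]
    exact Option.bind_congr fun c hc => rowChange_congr h (mem_Icc_of_ttEntry_eq_some hn hc)

theorem ttEntry_eq_none_of_le {j : ℕ} (hij : i ≤ j) (h : ttEntry A n (i + 1) = none) :
    ttEntry A n (j + 1) = none := by
  induction j, hij using Nat.le_induction with
  | base => exact h
  | succ j _ ih => simp [ttEntry, ih]

theorem ttFollows.mem_iff {D : Finset ℕ} (h : ttFollows A n D) :
    c ∈ D ↔ ∃ i ≥ 2, ttEntry A n i = some c := by
  rw [h.2 c]
  refine ⟨fun ⟨i, hi, _, hc⟩ => ⟨i, hi, hc⟩, fun ⟨i, hi, hc⟩ => ⟨i, hi, ?_, hc⟩⟩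
  by_contra! hlt
  obtain ⟨i, rfl⟩ := Nat.exists_eq_add_of_le' (one_le_two.trans hi)
  rw [ttEntry_eq_none_of_le (by omega) h.1] at hc
  exact Option.some_ne_none c hc.symm

theorem ttFollows.unique {D₁ D₂ : Finset ℕ} (h₁ : ttFollows A n D₁) (h₂ : ttFollows A n D₂) :
    D₁ = D₂ := by
  ext c
  rw [h₁.mem_iff, h₂.mem_iff]

theorem ttFollows.congr {D : Finset ℕ} (h : ttFollows A n D) (hAB : ttEntry A n = ttEntry B n) :
    ttFollows B n D := by
  rwa [ttFollows, ← hAB]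

end TopTravel

section Alternating

open scoped symmDiff

variable {r n : ℕ} {A B : ℕ → ℕ → ℤ} {c : Fin (r + 1) → ℕ}

/-- Each row of the `r`-row matrix `A` changes sign between consecutive columns of the chain
`c 0, …, c r`: row `i + 1` does so between `c i` and `c (i + 1)` (rows of `A` are 1-indexed). -/
def Alternates (A : ℕ → ℕ → ℤ) (c : Fin (r + 1) → ℕ) : Prop :=
  ∀ i : Fin r, A (i + 1) (c i.castSucc) ≠ A (i + 1) (c i.succ)

theorem Alternates.congr {C : Finset ℕ} (h : Alternates A c) (hc : ∀ i, c i ∈ C)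
    (hAB : SameSignChanges A B C) : Alternates B c :=
  fun i => (not_congr (hAB (i + 1) _ (hc _) _ (hc _))).mp (h i)

theorem Alternates.exists_ttEntry_le (h : Alternates A c) (hc : StrictMono c)
    (hcn : ∀ i, c i ∈ Finset.Icc 1 n) (i : Fin (r + 1)) :
    ∃ e ≤ c i, ttEntry A n (i + 1) = some e := by
  induction i using Fin.induction with
  | zero => exact ⟨1, (Finset.mem_Icc.mp (hcn 0)).1, rfl⟩
  | succ i ih =>
    obtain ⟨e, hle, he⟩ := ih
    obtain ⟨d, hd, hrow⟩ := exists_rowChange_le_of_le hle (hc i.castSucc_lt_succ)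
      (Finset.mem_Icc.mp (hcn i.succ)).2 (h i)
    refine ⟨d, hd, ?_⟩
    rw [Fin.val_castSucc] at he
    simp only [Fin.val_succ, ttEntry, he, Option.bind_some, hrow]

theorem Alternates.ttPositive (h : Alternates A c) (hc : StrictMono c)
    (hcn : ∀ i, c i ∈ Finset.Icc 1 n) : ttPositive A r n := by
  obtain ⟨e, -, he⟩ := h.exists_ttEntry_le hc hcn (Fin.last r)
  exact Option.isSome_iff_exists.mpr ⟨e, he⟩

theorem alternates_succ_iff {c : Fin (r + 1 + 1) → ℕ} :
    Alternates A c ↔ Alternates A (c ∘ Fin.castSucc) ∧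
      A (r + 1) (c (Fin.last r).castSucc) ≠ A (r + 1) (c (Fin.last (r + 1))) :=
  Fin.forall_fin_succ'

theorem exists_alternates_reorient (hc : Function.Injective c)
    (hA : ∀ i : Fin r, A (i + 1) (c i.castSucc) ≠ 0) : ∃ T, Alternates (reorient A T) c := by
  induction r with
  | zero => exact ⟨∅, fun i => i.elim0⟩
  | succ r ih =>
    obtain ⟨T, hT⟩ := ih (hc.comp (Fin.castSucc_injective _)) fun i => hA i.castSucc
    set x := c (Fin.last r).castSucc
    set y := c (Fin.last (r + 1))
    by_cases hxy : reorient A T (r + 1) x = reorient A T (r + 1) y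
    · -- Negating column `y` repairs the last row, and the earlier rows do not involve `y`.
      have hfirst : Alternates (reorient A (T ∆ {y})) (c ∘ Fin.castSucc) := by
        have hdisj : Disjoint (Finset.univ.image (c ∘ Fin.castSucc)) (T ∆ (T ∆ {y})) := by
          simp [symmDiff_symmDiff_cancel_left, y, hc.eq_iff, Fin.castSucc_ne_last]
        exact hT.congr (fun i => Finset.mem_image_of_mem _ (Finset.mem_univ i))
          (sameSignChanges_reorient A (.inr hdisj))
      have hlast : reorient A (T ∆ {y}) (r + 1) x ≠ reorient A (T ∆ {y}) (r + 1) y := by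
        have hx : A (r + 1) x ≠ 0 := hA (Fin.last r)
        have hne : x ≠ y := hc.ne (Fin.castSucc_ne_last _)
        rw [← reorient_reorient]
        simp only [reorient, Finset.mem_singleton] at hxy ⊢
        grind
      exact ⟨T ∆ {y}, alternates_succ_iff.mpr ⟨hfirst, hlast⟩⟩
    · exact ⟨T, alternates_succ_iff.mpr ⟨hT, hxy⟩⟩

end Alternating

section Neighborly

open Finset
open scoped symmDiff

variable {r n k : ℕ} {A : ℕ → ℕ → ℤ}

theorem IsNeighborly.lt_card_inter (hN : IsNeighborly A r n k) {C S : Finset ℕ}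
    (hC : C ⊆ Icc 1 n) (hcard : #C = r + 1)
    (hS : Alternates (reorient A S) (C.orderEmbOfFin hcard)) : k < #(C ∩ S) := by
  by_contra! hle
  have hCS : Disjoint C (S ∆ (C ∩ S)) := by
    rw [disjoint_left]
    simp +contextual [mem_symmDiff]
  refine hN (C ∩ S) (inter_subset_left.trans hC) hle (Alternates.ttPositive ?_
    (C.orderEmbOfFin hcard).strictMono fun i => hC (C.orderEmbOfFin_mem hcard i))
  exact hS.congr (C.orderEmbOfFin_mem hcard) (sameSignChanges_reorient A (.inr hCS))

theorem IsNeighborly.card_inter_eq (hN : IsNeighborly A (2 * k + 1) n k) {C S : Finset ℕ}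
    (hC : C ⊆ Icc 1 n) (hcard : #C = 2 * k + 1 + 1)
    (hS : Alternates (reorient A S) (C.orderEmbOfFin hcard)) : #(C ∩ S) = k + 1 := by
  have hCS : C ⊆ S ∆ (C \ S) := fun x hx => by
    by_cases hxS : x ∈ S <;> simp [hx, hxS]
  have hS' : Alternates (reorient A (C \ S)) (C.orderEmbOfFin hcard) :=
    hS.congr (C.orderEmbOfFin_mem hcard) (sameSignChanges_reorient A (.inl hCS))
  have h₁ : k < #(C ∩ S) := hN.lt_card_inter hC hcard hS
  have h₂ : k < #(C ∩ (C \ S)) := hN.lt_card_inter hC hcard hS'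
  rw [inter_eq_right.mpr sdiff_subset] at h₂
  have h₃ := card_sdiff_add_card_inter C S
  omega

theorem IsSignMatrix.even_card_inter_symmDiff (hA : IsSignMatrix (2 * k + 1) n A)
    {R₁ R₂ C : Finset ℕ} (h₁ : IsNeighborly (reorient A R₁) (2 * k + 1) n k)
    (h₂ : IsNeighborly (reorient A R₂) (2 * k + 1) n k) (hC : C ⊆ Icc 1 n)
    (hcard : #C = 2 * k + 1 + 1) : Even #(C ∩ (R₁ ∆ R₂)) := by
  obtain ⟨T, hT⟩ : ∃ T, Alternates (reorient A T) (C.orderEmbOfFin hcard) :=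
    exists_alternates_reorient (C.orderEmbOfFin hcard).injective fun i =>
      hA.ne_zero (mem_Icc.mpr (by omega)) (hC (C.orderEmbOfFin_mem hcard _))
  have card_eq {R : Finset ℕ} (hR : IsNeighborly (reorient A R) (2 * k + 1) n k) :
      #(C ∩ (R ∆ T)) = k + 1 :=
    hR.card_inter_eq hC hcard <| by rwa [reorient_reorient, symmDiff_symmDiff_cancel_left]
  have hRR : C ∩ (R₁ ∆ R₂) = (C ∩ (R₁ ∆ T)) ∆ (C ∩ (R₂ ∆ T)) := calc
    C ∩ (R₁ ∆ R₂) = C ∩ ((R₁ ∆ T) ∆ (R₂ ∆ T)) := by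
      rw [symmDiff_symmDiff_symmDiff_comm, symmDiff_self, symmDiff_bot]
    _ = (C ∩ (R₁ ∆ T)) ∆ (C ∩ (R₂ ∆ T)) := inf_symmDiff_distrib_left _ _ _
  rw [hRR]
  exact even_card_symmDiff_of_card_eq ((card_eq h₁).trans (card_eq h₂).symm)

theorem IsSignMatrix.sameSignChanges_of_isNeighborly (hA : IsSignMatrix (2 * k + 1) n A)
    (hn : 2 * k + 1 + 2 ≤ n) {R₁ R₂ : Finset ℕ}
    (h₁ : IsNeighborly (reorient A R₁) (2 * k + 1) n k)
    (h₂ : IsNeighborly (reorient A R₂) (2 * k + 1) n k) :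
    SameSignChanges (reorient A R₁) (reorient A R₂) (Icc 1 n) := by
  have hcard : 2 * k + 1 + 1 < #(Icc 1 n) := by
    rw [Nat.card_Icc]
    omega
  exact sameSignChanges_reorient A <| subset_or_disjoint_of_forall_even_card_inter hcard
    fun _ hC hCr => hA.even_card_inter_symmDiff h₁ h₂ hC hCr

end Neighborly

/-- For `k ≥ 1`, `r = 2k+1` and `n ≥ r+2`, every `r × n` sign matrix has at
most one `k`-neighborly plain travel. -/
theorem statement_8 (k n : ℕ) (hk : 1 ≤ k) (hn : 2 * k + 1 + 2 ≤ n)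
    (A : ℕ → ℕ → ℤ) (hA : IsSignMatrix (2 * k + 1) n A) :
    ∀ D₁ D₂ : Finset ℕ,
      IsPlainTravel (2 * k + 1) n D₁ → IsNeighborlyTravel A (2 * k + 1) n k D₁ →
      IsPlainTravel (2 * k + 1) n D₂ → IsNeighborlyTravel A (2 * k + 1) n k D₂ →
      D₁ = D₂ := by
  rintro D₁ D₂ - ⟨R₁, -, hD₁, hN₁⟩ - ⟨R₂, -, hD₂, hN₂⟩
  have hR : SameSignChanges (reorient A R₁) (reorient A R₂) (Finset.Icc 1 n) :=
    hA.sameSignChanges_of_isNeighborly hn hN₁ hN₂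
  have htt : ttEntry (reorient A R₁) n = ttEntry (reorient A R₂) n :=
    ttEntry_congr (by omega) hR
  exact (hD₁.congr htt).unique hD₂
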